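/- In the Gaussian sequence model X | θ ~ N(θ, σ_n² Iₙ), X̃ | θ ~ N(θ, σ_m² Iₙ) independent, let Θ = { θ : Σ_{i=1}^n a_i² θ_i² ≤ C } with 0 < a_1 ≤ a_2 ≤ ⋯ and let π be any prior probability distribution supported on Θ. Then the Bayes predictive density p̂_π(x̃ | x) = ∫ p(x̃ | θ') π(θ' | x) dθ' satisfies, for every θ ∈ ℝⁿ, R(θ, p̂_π) ≤ (1/(m σ_m²)) ( ‖θ‖² + C/a_1² ). -/

import Mathlib

open MeasureTheory Real Filter ProbabilityTheory

/-- Product Gaussian density on `ℝᵏ` with mean vector `μ` and common variance `v`. -/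
noncomputable def gaussD {k : ℕ} (μ : Fin k → ℝ) (v : ℝ) (x : Fin k → ℝ) : ℝ :=
  ∏ i, ((Real.sqrt (2 * Real.pi * v))⁻¹ * Real.exp (-((x i - μ i) ^ 2) / (2 * v)))

/-- Product Gaussian density with mean vector `μ` and coordinatewise variances `v`. -/
noncomputable def gaussDiagMean {k : ℕ} (μ v : Fin k → ℝ) (x : Fin k → ℝ) : ℝ :=
  ∏ i, ((Real.sqrt (2 * Real.pi * v i))⁻¹ * Real.exp (-((x i - μ i) ^ 2) / (2 * v i)))

/-- Average KL risk `(1/m) E log(p(X̃|θ)/p̂(X̃|X))` in the Gaussian sequence model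
`X|θ ~ N(θ, vn Iₙ)`, `X̃|θ ~ N(θ, vm Iₙ)` independent. -/
noncomputable def klRisk (n m : ℕ) (vn vm : ℝ) (θ : Fin n → ℝ)
    (phat : (Fin n → ℝ) → (Fin n → ℝ) → ℝ) : ℝ :=
  (m : ℝ)⁻¹ * ∫ x : Fin n → ℝ, ∫ xt : Fin n → ℝ,
    gaussD θ vn x * gaussD θ vm xt * Real.log (gaussD θ vm xt / phat x xt)

/-- Bayes predictive density under the diagonal Gaussian prior `N(0, diag s)`. -/
noncomputable def bayesPredS (n : ℕ) (vn vm : ℝ) (s : Fin n → ℝ)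
    (x xt : Fin n → ℝ) : ℝ :=
  (∫ θ : Fin n → ℝ, gaussD θ vn x * gaussD θ vm xt * gaussDiagMean 0 s θ) /
  (∫ θ : Fin n → ℝ, gaussD θ vn x * gaussDiagMean 0 s θ)

/-- The ellipsoid `Θ(C) = {θ : Σ aᵢ² θᵢ² ≤ C}`. -/
def ellipsoid (n : ℕ) (a : Fin n → ℝ) (C : ℝ) : Set (Fin n → ℝ) :=
  {θ | ∑ i, (a i) ^ 2 * (θ i) ^ 2 ≤ C}

/-- `phat` is a predictive density: for each observation it is a probability density. -/
def IsPredDensity (n : ℕ) (phat : (Fin n → ℝ) → (Fin n → ℝ) → ℝ) : Prop :=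
  ∀ x, (∀ y, 0 ≤ phat x y) ∧ (∫ y : Fin n → ℝ, phat x y) = 1

/-- Minimax average KL prediction risk over all predictive densities. -/
noncomputable def minimaxRisk (n m : ℕ) (vn vm : ℝ) (Θ : Set (Fin n → ℝ)) : ℝ :=
  sInf { r | ∃ phat, IsPredDensity n phat ∧
    r = sSup { t | ∃ θ ∈ Θ, t = klRisk n m vn vm θ phat } }

/-- Linear minimax risk: minimax over Bayes predictive densities under diagonal
Gaussian priors. -/
noncomputable def linMinimaxRisk (n m : ℕ) (vn vm : ℝ) (Θ : Set (Fin n → ℝ)) : ℝ :=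
  sInf { r | ∃ s : Fin n → ℝ, (∀ i, 0 ≤ s i) ∧
    r = sSup { t | ∃ θ ∈ Θ, t = klRisk n m vn vm θ (bayesPredS n vn vm s) } }

/-- Bayes predictive density under a prior probability measure `π` on `θ`. -/
noncomputable def bayesPredMeasure (n : ℕ) (vn vm : ℝ) (pr : Measure (Fin n → ℝ))
    (x xt : Fin n → ℝ) : ℝ :=
  (∫ θ, gaussD θ vn x * gaussD θ vm xt ∂pr) / (∫ θ, gaussD θ vn x ∂pr)


lemma gaussD_eq_pdf {k : ℕ} (μ : Fin k → ℝ) (v : NNReal) (x : Fin k → ℝ) :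
    gaussD μ v x = ∏ i, gaussianPDFReal (μ i) v (x i) := by
  simp [gaussD, gaussianPDFReal]

lemma pdf_mul_integrable (μ : ℝ) (v : NNReal) (hv : v ≠ 0) :
    Integrable (fun x => gaussianPDFReal μ v x * x) := by
  have h : Integrable (fun x : ℝ => x) (gaussianReal μ v) :=
    (memLp_id_gaussianReal (μ := μ) (v := v) 1).integrable (by simp)
  rw [gaussianReal_of_var_ne_zero _ hv,
    integrable_withDensity_iff_integrable_smul' (measurable_gaussianPDF μ v)
      (by filter_upwards with x; simp [gaussianPDF])] at h
  simpa [toReal_gaussianPDF] using h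

lemma pdf_mul_integral (μ : ℝ) (v : NNReal) (hv : v ≠ 0) :
    ∫ x, gaussianPDFReal μ v x * x = μ := by
  have h := integral_id_gaussianReal (μ := μ) (v := v)
  rw [integral_gaussianReal_eq_integral_smul hv] at h
  simpa using h

lemma gaussD_integrable {k : ℕ} (μ : Fin k → ℝ) (v : NNReal) :
    Integrable (fun x => gaussD μ v x) := by
  simp only [gaussD_eq_pdf]
  exact Integrable.fintype_prod (f := fun i x => gaussianPDFReal (μ i) v x)
    (fun i => integrable_gaussianPDFReal _ _)

lemma gaussD_integral {k : ℕ} (μ : Fin k → ℝ) (v : NNReal) (hv : v ≠ 0) :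
    ∫ x, gaussD μ v x = 1 := by
  simp only [gaussD_eq_pdf]
  rw [integral_fintype_prod_volume_eq_prod (fun i x => gaussianPDFReal (μ i) v x)]
  simp [integral_gaussianPDFReal_eq_one _ hv]

lemma gaussD_mul_eq {k : ℕ} (μ : Fin k → ℝ) (v : NNReal) (i : Fin k) (x : Fin k → ℝ) :
    gaussD μ v x * x i = ∏ j, (fun j y => gaussianPDFReal (μ j) v y * (if j = i then y else 1)) j (x j) := by
  simp only [gaussD_eq_pdf, Finset.prod_mul_distrib]
  simp

lemma gaussD_mul_integrable {k : ℕ} (μ : Fin k → ℝ) (v : NNReal) (hv : v ≠ 0) (i : Fin k) :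
    Integrable (fun x => gaussD μ v x * x i) := by
  simp only [gaussD_mul_eq]
  refine Integrable.fintype_prod
    (f := (fun j y => gaussianPDFReal (μ j) v y * (if j = i then y else 1))) (fun j => ?_)
  by_cases h : j = i
  · simpa [h] using pdf_mul_integrable _ v hv
  · simpa [h] using integrable_gaussianPDFReal _ _

lemma gaussD_mul_integral {k : ℕ} (μ : Fin k → ℝ) (v : NNReal) (hv : v ≠ 0) (i : Fin k) :
    ∫ x, gaussD μ v x * x i = μ i := by
  simp only [gaussD_mul_eq]
  rw [integral_fintype_prod_volume_eq_prod
    (fun j y => gaussianPDFReal (μ j) v y * (if j = i then y else 1))]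
  rw [Finset.prod_eq_single i]
  · simpa using pdf_mul_integral _ v hv
  · intro j _ h
    simpa [h] using integral_gaussianPDFReal_eq_one _ hv
  · simp

lemma gaussD_pos {k : ℕ} (μ : Fin k → ℝ) (v : ℝ) (hv : 0 < v) (x : Fin k → ℝ) :
    0 < gaussD μ v x := by
  unfold gaussD; positivity

lemma gaussD_cont {k : ℕ} (v : ℝ) (x : Fin k → ℝ) :
    Continuous (fun μ : Fin k → ℝ => gaussD μ v x) := by
  unfold gaussD; fun_prop

lemma gaussD_le {k : ℕ} (μ : Fin k → ℝ) (v : ℝ) (hv : 0 < v) (x : Fin k → ℝ) :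
    gaussD μ v x ≤ ∏ _i : Fin k, (Real.sqrt (2 * Real.pi * v))⁻¹ := by
  unfold gaussD
  refine Finset.prod_le_prod (fun i _ => by positivity) (fun i _ => ?_)
  refine mul_le_of_le_one_right (by positivity) ?_
  rw [Real.exp_le_one_iff]
  exact div_nonpos_of_nonpos_of_nonneg (by nlinarith [sq_nonneg (x i - μ i)]) (by positivity)

lemma gaussD_ratio {k : ℕ} (θ t : Fin k → ℝ) (v : ℝ) (hv : 0 < v) (x : Fin k → ℝ) :
    gaussD t v x = gaussD θ v x *
      Real.exp (∑ i, x i * (t i - θ i) / v + (∑ i, θ i ^ 2 - ∑ i, t i ^ 2) / (2 * v)) := by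
  have : ∑ i, x i * (t i - θ i) / v + (∑ i, θ i ^ 2 - ∑ i, t i ^ 2) / (2 * v)
      = ∑ i, (x i * (t i - θ i) / v + (θ i ^ 2 - t i ^ 2) / (2 * v)) := by
    rw [Finset.sum_add_distrib, ← Finset.sum_sub_distrib, Finset.sum_div]
  rw [this, Real.exp_sum]
  unfold gaussD
  rw [← Finset.prod_mul_distrib]
  refine Finset.prod_congr rfl (fun i _ => ?_)
  rw [mul_assoc (√(2 * π * v))⁻¹, ← Real.exp_add]
  congr 2
  field_simp
  ring

lemma tangent {α : Type*} [MeasurableSpace α] (pr : Measure α) (w l f : α → ℝ) (P c : ℝ)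
    (hP : 0 ≤ P) (hw : ∀ t, 0 ≤ w t) (hwi : Integrable w pr)
    (hl : Integrable (fun t => w t * l t) pr) (hf : Integrable (fun t => w t * f t) pr)
    (hfl : ∀ᵐ t ∂pr, P * Real.exp (l t) ≤ f t)
    (hc : ∫ t, w t * l t ∂pr = c * ∫ t, w t ∂pr) :
    P * Real.exp c * ∫ t, w t ∂pr ≤ ∫ t, w t * f t ∂pr := by
  have h1 : ∫ t, (P * Real.exp c) * ((1 - c) * w t + w t * l t) ∂pr
      = P * Real.exp c * ∫ t, w t ∂pr := by
    rw [integral_const_mul, integral_add (hwi.const_mul _) hl, integral_const_mul, hc]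
    ring
  rw [← h1]
  refine integral_mono_ae (((hwi.const_mul _).add hl).const_mul _) hf ?_
  filter_upwards [hfl] with t ht
  have h2 : Real.exp c * (1 - c + l t) ≤ Real.exp (l t) := by
    have := Real.add_one_le_exp (l t - c)
    have h3 : Real.exp (l t) = Real.exp c * Real.exp (l t - c) := by
      rw [← Real.exp_add]; congr 1; ring
    rw [h3]
    exact mul_le_mul_of_nonneg_left (by linarith) (Real.exp_pos _).le
  calc (P * Real.exp c) * ((1 - c) * w t + w t * l t)
      = w t * (P * (Real.exp c * (1 - c + l t))) := by ring
    _ ≤ w t * (P * Real.exp (l t)) := by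
        have := hw t
        gcongr
    _ ≤ w t * f t := mul_le_mul_of_nonneg_left ht (hw t)

/-- Inner bound for a fixed observation. -/
lemma inner_bound {n : ℕ} (vn vm : NNReal) (hvn : 0 < vn) (hvm : 0 < vm) (B : ℝ)
    (hB : 0 ≤ B) (pr : Measure (Fin n → ℝ)) [IsProbabilityMeasure pr]
    (hsupp : ∀ᵐ t ∂pr, ∑ i, t i ^ 2 ≤ B) (θ x : Fin n → ℝ) :
    ∫ xt : Fin n → ℝ, gaussD θ vn x * gaussD θ vm xt *
        Real.log (gaussD θ vm xt / bayesPredMeasure n vn vm pr x xt)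
      ≤ gaussD θ vn x * ((∑ i, θ i ^ 2 + B) / vm) := by
  have hvn' : (0 : ℝ) < vn := hvn
  have hvm' : (0 : ℝ) < vm := hvm
  have hg := gaussD_pos θ vn hvn' x
  have hS : 0 ≤ ∑ i, θ i ^ 2 := Finset.sum_nonneg (fun i _ => sq_nonneg _)
  set S := ∑ i, θ i ^ 2 with hSdef
  set w : (Fin n → ℝ) → ℝ := fun t => gaussD t vn x with hwdef
  have hwpos : ∀ t, 0 < w t := fun t => gaussD_pos t vn hvn' x
  have hwc : Continuous w := gaussD_cont _ _
  have hwi : Integrable w pr := by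
    refine Integrable.of_bound hwc.aestronglyMeasurable
      (∏ _i : Fin n, (Real.sqrt (2 * Real.pi * vn))⁻¹) (ae_of_all _ fun t => ?_)
    rw [Real.norm_of_nonneg (hwpos t).le]
    exact gaussD_le _ _ hvn' _
  have hwti : ∀ i, Integrable (fun t => w t * t i) pr := by
    intro i
    refine hwi.mul_bdd (c := 1 + B) (continuous_apply i).aestronglyMeasurable ?_
    filter_upwards [hsupp] with t ht
    have : t i ^ 2 ≤ B := le_trans
      (Finset.single_le_sum (f := fun i => t i ^ 2) (fun i _ => sq_nonneg _) (Finset.mem_univ i)) ht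
    rw [Real.norm_eq_abs, abs_le]
    constructor <;> nlinarith
  set D := ∫ t, w t ∂pr with hD
  have hDpos : 0 < D := by
    rw [hD, integral_pos_iff_support_of_nonneg (fun t => (hwpos t).le) hwi]
    have : Function.support w = Set.univ := by
      ext t; simp [(hwpos t).ne']
    simp [this]
  set b : Fin n → ℝ := fun i => (∫ t, w t * t i ∂pr) / D with hb
  have hbD : ∀ i, ∫ t, w t * t i ∂pr = b i * D := by
    intro i; simp only [hb]; field_simp
  -- inner product bound
  have hTb : -(S + B) / 2 ≤ ∑ i, θ i * b i := by
    have e : ∫ t, ∑ i, θ i * (w t * t i) ∂pr = (∑ i, θ i * b i) * D := by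
      rw [integral_finsetSum _ (fun i _ => (hwti i).const_mul _), Finset.sum_mul]
      refine Finset.sum_congr rfl (fun i _ => ?_)
      rw [integral_const_mul, hbD]; ring
    have e2 : ∫ t, (-(S + B) / 2) * w t ∂pr ≤ ∫ t, ∑ i, θ i * (w t * t i) ∂pr := by
      refine integral_mono_ae (hwi.const_mul _)
        (integrable_finsetSum _ (fun i _ => (hwti i).const_mul _)) ?_
      filter_upwards [hsupp] with t ht
      have h0 : 0 ≤ ∑ i, (θ i + t i) ^ 2 := Finset.sum_nonneg (fun i _ => sq_nonneg _)
      have h1 : ∑ i, (θ i + t i) ^ 2 = S + ∑ i, t i ^ 2 + 2 * ∑ i, θ i * t i := by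
        rw [hSdef, Finset.mul_sum, ← Finset.sum_add_distrib, ← Finset.sum_add_distrib]
        exact Finset.sum_congr rfl (fun i _ => by ring)
      have h2 : ∑ i, θ i * (w t * t i) = (∑ i, θ i * t i) * w t := by
        rw [Finset.sum_mul]
        exact Finset.sum_congr rfl (fun i _ => by ring)
      simp only [h2]
      exact mul_le_mul_of_nonneg_right (by linarith) (hwpos t).le
    rw [e, integral_const_mul] at e2
    exact le_of_mul_le_mul_right e2 hDpos
  set K := (S - B) / (2 * vm) with hK
  set c : (Fin n → ℝ) → ℝ := fun xt => ∑ i, xt i * (b i - θ i) / vm + K with hc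
  have hlog : ∀ xt, Real.log (gaussD θ vm xt / bayesPredMeasure n vn vm pr x xt) ≤ - c xt := by
    intro xt
    have hp := gaussD_pos θ vm hvm' xt
    have hlin : ∀ t : Fin n → ℝ, w t * (∑ i, xt i * (t i - θ i) / vm + K) =
        ∑ i, ((xt i / vm) * (w t * t i) - (xt i / vm * θ i) * w t) + K * w t := by
      intro t
      rw [mul_add, Finset.mul_sum]
      congr 1
      · exact Finset.sum_congr rfl (fun i _ => by ring)
      · ring
    have hsi : ∀ i ∈ Finset.univ, Integrable (fun t : Fin n → ℝ =>
        (xt i / vm) * (w t * t i) - (xt i / vm * θ i) * w t) pr :=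
      fun i _ => ((hwti i).const_mul _).sub (hwi.const_mul _)
    have key := tangent pr w (fun t => ∑ i, xt i * (t i - θ i) / vm + K)
      (fun t => gaussD t vm xt) (gaussD θ vm xt) (c xt) hp.le (fun t => (hwpos t).le) hwi
      (by
        simp only [hlin]
        exact (integrable_finsetSum _ hsi).add (hwi.const_mul _))
      (by
        refine hwi.mul_bdd (c := ∏ _i : Fin n, (Real.sqrt (2 * Real.pi * vm))⁻¹)
          (gaussD_cont _ _).aestronglyMeasurable (ae_of_all _ fun t => ?_)
        rw [Real.norm_of_nonneg (gaussD_pos _ _ hvm' _).le]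
        exact gaussD_le _ _ hvm' _)
      (by
        filter_upwards [hsupp] with t ht
        rw [gaussD_ratio θ t vm hvm' xt, hK]
        gcongr)
      (by
        simp only [hlin]
        rw [integral_add (integrable_finsetSum _ hsi) (hwi.const_mul _),
          integral_finsetSum _ hsi, integral_const_mul, hc, add_mul, Finset.sum_mul]
        congr 1
        refine Finset.sum_congr rfl (fun i _ => ?_)
        rw [integral_sub ((hwti i).const_mul _) (hwi.const_mul _), integral_const_mul,
          integral_const_mul, hbD]
        ring)
    have hph : gaussD θ vm xt * Real.exp (c xt) ≤ bayesPredMeasure n vn vm pr x xt := by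
      unfold bayesPredMeasure
      rw [le_div_iff₀ hDpos]
      exact key
    have hpos : 0 < gaussD θ vm xt * Real.exp (c xt) := by positivity
    have hph0 := hpos.trans_le hph
    rw [Real.log_le_iff_le_exp (by positivity), div_le_iff₀ hph0, Real.exp_neg,
      ← div_eq_inv_mul, le_div_iff₀ (Real.exp_pos _)]
    exact hph
  have hne : vm ≠ 0 := hvm.ne'
  have hrw : ∀ xt, gaussD θ vn x * gaussD θ vm xt * (- c xt) =
      gaussD θ vn x * (∑ i, (-(b i - θ i) / vm) * (gaussD θ vm xt * xt i)
        + (-K) * gaussD θ vm xt) := by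
    intro xt
    have : ∑ i, (-(b i - θ i) / vm) * (gaussD θ vm xt * xt i)
        = gaussD θ vm xt * (- ∑ i, xt i * (b i - θ i) / vm) := by
      rw [← Finset.sum_neg_distrib, Finset.mul_sum]
      exact Finset.sum_congr rfl (fun i _ => by ring)
    rw [this, hc]; ring
  have hsi2 : ∀ i ∈ Finset.univ, Integrable
      (fun xt : Fin n → ℝ => (-(b i - θ i) / vm) * (gaussD θ vm xt * xt i)) :=
    fun i _ => (gaussD_mul_integrable θ vm hne i).const_mul _
  have hUi : Integrable (fun xt => gaussD θ vn x * gaussD θ vm xt * (- c xt)) := by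
    simp only [hrw]
    exact ((integrable_finsetSum _ hsi2).add ((gaussD_integrable θ vm).const_mul _)).const_mul _
  have hU : ∫ xt, gaussD θ vn x * gaussD θ vm xt * (- c xt) ≤
      gaussD θ vn x * ((S + B) / vm) := by
    simp only [hrw]
    rw [integral_const_mul, integral_add (integrable_finsetSum _ hsi2)
      ((gaussD_integrable θ vm).const_mul _), integral_finsetSum _ hsi2, integral_const_mul,
      gaussD_integral θ vm hne]
    simp only [integral_const_mul, gaussD_mul_integral θ vm hne]
    refine mul_le_mul_of_nonneg_left ?_ hg.le
    have h3 : ∑ i, (-(b i - θ i) / vm) * θ i = (S - ∑ i, θ i * b i) / vm := by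
      rw [hSdef, ← Finset.sum_sub_distrib, Finset.sum_div]
      exact Finset.sum_congr rfl (fun i _ => by ring)
    rw [h3, hK]
    have h4 : (S - ∑ i, θ i * b i) / vm + -((S - B) / (2 * vm)) * 1
      = (S - ∑ i, θ i * b i - (S - B) / 2) / vm := by
      field_simp
      ring
    rw [h4]
    gcongr
    linarith
  by_cases hI : Integrable (fun xt => gaussD θ vn x * gaussD θ vm xt *
        Real.log (gaussD θ vm xt / bayesPredMeasure n vn vm pr x xt))
  · refine le_trans (integral_mono hI hUi fun xt => ?_) hU
    exact mul_le_mul_of_nonneg_left (hlog xt) (mul_pos hg (gaussD_pos _ _ hvm' _)).le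
  · rw [integral_undef hI]
    positivity

/-- for any prior supported on the ellipsoid `Θ`, the Bayes predictive density
has KL risk bounded by `(1/(m σ_m²)) (‖θ‖² + C/a₁²)` at every `θ`. -/
theorem stmt13 (n m : ℕ) (hn : 0 < n) (hm : 0 < m)
    (a : Fin n → ℝ) (ha : ∀ i, 0 < a i) (hmono : Monotone a) (C : ℝ) (hC : 0 < C)
    (pr : Measure (Fin n → ℝ)) [IsProbabilityMeasure pr]
    (hsupp : pr (ellipsoid n a C)ᶜ = 0) :
    ∀ θ : Fin n → ℝ,
      klRisk n m ((n : ℝ)⁻¹) ((m : ℝ)⁻¹) θ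
          (bayesPredMeasure n ((n : ℝ)⁻¹) ((m : ℝ)⁻¹) pr) ≤
        (1 / ((m : ℝ) * (m : ℝ)⁻¹)) * (∑ i, (θ i) ^ 2 + C / (a ⟨0, hn⟩) ^ 2) := by
  intro θ
  have ha0 := ha ⟨0, hn⟩
  set B := C / (a ⟨0, hn⟩) ^ 2 with hBdef
  have hB : 0 < B := by positivity
  have hm' : (0 : ℝ) < m := by exact_mod_cast hm
  have hs : ∀ᵐ t ∂pr, ∑ i, t i ^ 2 ≤ B := by
    have h0 : ∀ᵐ t ∂pr, t ∈ ellipsoid n a C := hsupp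
    filter_upwards [h0] with t ht
    rw [hBdef, le_div_iff₀ (by positivity), Finset.sum_mul]
    refine le_trans (Finset.sum_le_sum fun i _ => ?_) ht
    have : a ⟨0, hn⟩ ≤ a i := hmono (Fin.mk_le_of_le_val (Nat.zero_le _))
    rw [mul_comm]
    gcongr
  have hS : 0 ≤ ∑ i, θ i ^ 2 := Finset.sum_nonneg (fun i _ => sq_nonneg _)
  have hvn : (0 : NNReal) < (n : NNReal)⁻¹ := by
    have : (0 : NNReal) < n := by exact_mod_cast hn
    positivity
  have hvm : (0 : NNReal) < (m : NNReal)⁻¹ := by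
    have : (0 : NNReal) < m := by exact_mod_cast hm
    positivity
  have hin := inner_bound (n : NNReal)⁻¹ (m : NNReal)⁻¹ hvn hvm B hB.le pr hs θ
  have hgi := gaussD_integrable θ (n : NNReal)⁻¹
  have hg1 := gaussD_integral θ (n : NNReal)⁻¹ hvn.ne'
  push_cast at hin hgi hg1
  have hfin : ∫ x : Fin n → ℝ, ∫ xt : Fin n → ℝ,
      gaussD θ (n : ℝ)⁻¹ x * gaussD θ (m : ℝ)⁻¹ xt *
        Real.log (gaussD θ (m : ℝ)⁻¹ xt / bayesPredMeasure n (n : ℝ)⁻¹ (m : ℝ)⁻¹ pr x xt)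
      ≤ (∑ i, θ i ^ 2 + B) / (m : ℝ)⁻¹ := by
    by_cases hI : Integrable (fun x : Fin n → ℝ => ∫ xt : Fin n → ℝ,
      gaussD θ (n : ℝ)⁻¹ x * gaussD θ (m : ℝ)⁻¹ xt *
        Real.log (gaussD θ (m : ℝ)⁻¹ xt / bayesPredMeasure n (n : ℝ)⁻¹ (m : ℝ)⁻¹ pr x xt))
    · refine le_trans (integral_mono hI (hgi.mul_const _) hin) ?_
      rw [integral_mul_const, hg1, one_mul]
    · rw [integral_undef hI]
      positivity
  unfold klRisk
  refine le_trans (mul_le_mul_of_nonneg_left hfin (by positivity)) (le_of_eq ?_)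
  field_simp
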